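/- Let p be an odd prime and K := ℚ(√−p). Then the following are equivalent: (i) p ≡ 3 (mod 8); (ii) the prime 2 is inert in K (i.e. 2·O_K is a prime ideal of the ring of integers O_K) and the 2-torsion subgroup Cl(K)[2] of the ideal class group of K is trivial. -/

import Mathlib

/-!
Statement 19: for an odd prime `p` and `K = ℚ(√−p)`, one has `p ≡ 3 (mod 8)` if and
only if 2 is inert in `K` and the class group of `K` has trivial 2-torsion.
-/

open scoped NumberField

/-- `K` is (isomorphic to) the quadratic field `ℚ(√−d)`. -/
def IsQsqrtNeg (d : ℕ) (K : Type*) [Field K] [Algebra ℚ K] : Prop :=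
  ∃ α : K, α ^ 2 = -(d : K) ∧ Algebra.adjoin ℚ {α} = ⊤

namespace IsQsqrtNeg

variable {d : ℕ} {K : Type*} [Field K] [CharZero K] {α : K}

theorem rat_add_mul_eq_zero (hd : 0 < d) (hα : α ^ 2 = -(d : K)) {u v : ℚ}
    (h : (u : K) + v * α = 0) : u = 0 ∧ v = 0 := by
  have h1 : ((u ^ 2 + d * v ^ 2 : ℚ) : K) = 0 := by
    push_cast
    linear_combination (u - v * α) * h + (v : K) ^ 2 * hα
  have h2 : u ^ 2 + d * v ^ 2 = 0 := by exact_mod_cast h1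
  have hd' : (0 : ℚ) < d := by exact_mod_cast hd
  have hv : v ^ 2 = 0 := by nlinarith [sq_nonneg u, sq_nonneg v]
  have hu : u ^ 2 = 0 := by nlinarith [sq_nonneg u, sq_nonneg v]
  exact ⟨pow_eq_zero_iff two_ne_zero |>.1 hu, pow_eq_zero_iff two_ne_zero |>.1 hv⟩

theorem exists_algEquiv (hd : 0 < d) (hα : α ^ 2 = -(d : K)) (htop : Algebra.adjoin ℚ {α} = ⊤) :
    ∃ e : QuadraticAlgebra ℚ (-d) 0 ≃ₐ[ℚ] K, ∀ z, e z = (z.re : K) + z.im * α := by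
  let f : QuadraticAlgebra ℚ (-d) 0 →ₐ[ℚ] K := QuadraticAlgebra.lift
    ⟨α, by rw [← sq, hα]; simp [Algebra.smul_def]⟩
  have hf (z) : f z = (z.re : K) + z.im * α := by
    simp [f, Algebra.smul_def]
  have hinj : Function.Injective f := by
    rw [injective_iff_map_eq_zero]
    intro z hz
    rw [hf] at hz
    obtain ⟨h1, h2⟩ := rat_add_mul_eq_zero hd hα hz
    ext <;> simp [h1, h2]
  have hsurj : Function.Surjective f := by
    rw [← AlgHom.range_eq_top, ← top_le_iff, ← htop, Algebra.adjoin_le_iff]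
    rintro _ rfl
    exact ⟨⟨0, 1⟩, by simp [f]⟩
  exact ⟨AlgEquiv.ofBijective f ⟨hinj, hsurj⟩, hf⟩

theorem exists_rat_add_mul (hd : 0 < d) (hα : α ^ 2 = -(d : K))
    (htop : Algebra.adjoin ℚ {α} = ⊤) (x : K) : ∃ u v : ℚ, x = u + v * α := by
  obtain ⟨e, he⟩ := exists_algEquiv hd hα htop
  exact ⟨(e.symm x).re, (e.symm x).im, by rw [← he, e.apply_symm_apply]⟩

theorem norm_rat_add_mul (hd : 0 < d) (hα : α ^ 2 = -(d : K))
    (htop : Algebra.adjoin ℚ {α} = ⊤) (u v : ℚ) :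
    Algebra.norm ℚ ((u : K) + v * α) = u ^ 2 + d * v ^ 2 := by
  obtain ⟨e, he⟩ := exists_algEquiv hd hα htop
  have h := Algebra.norm_eq_of_algEquiv e ⟨u, v⟩
  rw [he] at h
  rw [h, Algebra.norm_apply]
  trans QuadraticAlgebra.norm (⟨u, v⟩ : QuadraticAlgebra ℚ (-d) 0)
  · rw [← QuadraticAlgebra.det_toLinearMap_eq_norm]
    rfl
  · change u * u + 0 * u * v - -(d : ℚ) * v * v = _
    ring

theorem exists_int_norm (hd : 0 < d) (hα : α ^ 2 = -(d : K))
    (htop : Algebra.adjoin ℚ {α} = ⊤) {u v : ℚ} (h : IsIntegral ℤ ((u : K) + v * α)) :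
    ∃ n : ℤ, (n : ℚ) = u ^ 2 + d * v ^ 2 := by
  have := Algebra.isIntegral_norm ℚ h
  rw [norm_rat_add_mul hd hα htop] at this
  exact IsIntegrallyClosed.isIntegral_iff.1 this

theorem exists_int_trace (hd : 0 < d) (hα : α ^ 2 = -(d : K))
    (htop : Algebra.adjoin ℚ {α} = ⊤) {u v : ℚ} (h : IsIntegral ℤ ((u : K) + v * α)) :
    ∃ s : ℤ, (s : ℚ) = 2 * u := by
  obtain ⟨n, hn⟩ := exists_int_norm hd hα htop h
  have h1 : IsIntegral ℤ (((u + 1 : ℚ) : K) + v * α) := by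
    have h2 : ((u + 1 : ℚ) : K) + v * α = (u + v * α) + 1 := by push_cast; ring
    rw [h2]
    exact h.add isIntegral_one
  obtain ⟨k, hk⟩ := exists_int_norm hd hα htop h1
  exact ⟨k - n - 1, by push_cast; rw [hk, hn]; ring⟩

theorem exists_int_im {p : ℕ} (hp : p.Prime) {w : ℚ} {k : ℤ} (h : p * w ^ 2 = k) :
    ∃ b : ℤ, (b : ℚ) = w := by
  have h1 : IsIntegral ℤ (p * w) := by
    refine IsIntegral.of_pow two_pos ?_
    have : (p * w) ^ 2 = ((p * k : ℤ) : ℚ) := by push_cast; rw [← h]; ring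
    rw [this]
    exact isIntegral_algebraMap (R := ℤ) (A := ℚ)
  obtain ⟨z, hz⟩ : ∃ z : ℤ, (z : ℚ) = p * w := IsIntegrallyClosed.isIntegral_iff.1 h1
  have h2 : z ^ 2 = p * k := by
    have : (z : ℚ) ^ 2 = p * k := by rw [hz, ← h]; ring
    exact_mod_cast this
  obtain ⟨b, rfl⟩ := (Nat.prime_iff_prime_int.1 hp).dvd_of_dvd_pow (Dvd.intro _ h2.symm)
  have : (p : ℚ) ≠ 0 := by exact_mod_cast hp.ne_zero
  exact ⟨b, mul_left_cancel₀ this (by exact_mod_cast hz)⟩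

end IsQsqrtNeg

/-- `R` has norm form `a ^ 2 + a * b + m * b ^ 2` in the coordinates `a + b * θ` over `ℤ`, where
`θ ^ 2 = θ - m` and `4 * m = 1 + p`. -/
structure IsNormFormGenerator (p : ℕ) {R : Type*} [CommRing R] (m : ℤ) (θ : R) : Prop where
  four_mul : 4 * m = 1 + p
  sq_eq : θ ^ 2 = θ - m
  exists_eq (x : R) : ∃ a b : ℤ, x = a + b * θ
  norm_eq (a b : ℤ) : Algebra.norm ℤ (a + b * θ) = a ^ 2 + a * b + m * b ^ 2

namespace IsNormFormGenerator

variable {p : ℕ} {R : Type*} [CommRing R] {m : ℤ} {θ : R}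

theorem int_add_mul_eq_zero [IsDomain R] [Module.Free ℤ R] [Module.Finite ℤ R]
    (h : IsNormFormGenerator p m θ) {a b : ℤ} (hab : (a : R) + b * θ = 0) : a = 0 ∧ b = 0 := by
  have h1 := h.norm_eq a b
  rw [hab, Algebra.norm_zero] at h1
  have h4 := h.four_mul
  have h2 : (2 * a + b) ^ 2 + p * b ^ 2 = 0 := by linear_combination -4 * h1 - b ^ 2 * h4
  rcases Nat.eq_zero_or_pos p with rfl | hp
  · omega
  have hp' : (0 : ℤ) < p := by exact_mod_cast hp
  have hb : b = 0 := by
    have : b ^ 2 = 0 := by nlinarith [sq_nonneg (2 * a + b), sq_nonneg b]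
    simpa using this
  subst hb
  have : a ^ 2 = 0 := by linarith
  exact ⟨by simpa using this, rfl⟩

theorem intCast_dvd_iff [IsDomain R] [Module.Free ℤ R] [Module.Finite ℤ R]
    (h : IsNormFormGenerator p m θ) {n a b : ℤ} :
    (n : R) ∣ a + b * θ ↔ n ∣ a ∧ n ∣ b := by
  constructor
  · rintro ⟨y, hy⟩
    obtain ⟨c, d, rfl⟩ := h.exists_eq y
    have h1 : ((a - n * c : ℤ) : R) + (b - n * d : ℤ) * θ = 0 := by
      push_cast
      linear_combination hy
    obtain ⟨h2, h3⟩ := h.int_add_mul_eq_zero h1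
    exact ⟨⟨c, by linarith⟩, ⟨d, by linarith⟩⟩
  · rintro ⟨⟨c, rfl⟩, ⟨d, rfl⟩⟩
    exact ⟨c + d * θ, by push_cast; ring⟩

theorem intCast_dvd_intCast_iff [IsDomain R] [Module.Free ℤ R] [Module.Finite ℤ R]
    (h : IsNormFormGenerator p m θ) {n a : ℤ} : (n : R) ∣ a ↔ n ∣ a := by
  have := h.intCast_dvd_iff (n := n) (a := a) (b := 0)
  simpa using this

theorem isPrime_span_two [IsDomain R] [Module.Free ℤ R] [Module.Finite ℤ R]
    (h : IsNormFormGenerator p m θ) (hm : Odd m) : (Ideal.span {(2 : R)}).IsPrime := by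
  have key (a b : ℤ) : (2 : R) ∣ a + b * θ ↔ Even (Algebra.norm ℤ ((a : R) + b * θ)) := by
    rw [h.norm_eq, show (2 : R) = (2 : ℤ) by norm_cast, h.intCast_dvd_iff, ← even_iff_two_dvd,
      ← even_iff_two_dvd]
    simp only [Int.even_add, Int.even_mul, Int.even_pow, Int.not_even_iff_odd.2 hm]
    tauto
  have key' (x : R) : (2 : R) ∣ x ↔ Even (Algebra.norm ℤ x) := by
    obtain ⟨a, b, rfl⟩ := h.exists_eq x
    exact key a b
  constructor
  · rw [Ideal.ne_top_iff_one, Ideal.mem_span_singleton, key']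
    simp
  · intro x y
    simp only [Ideal.mem_span_singleton, key', map_mul, Int.even_mul, imp_self]

theorem natCast_dvd_of_dvd_sq [IsDomain R] [Module.Free ℤ R] [Module.Finite ℤ R]
    (h : IsNormFormGenerator p m θ) (hp : p.Prime) {q : ℕ} (hq : q.Prime) (hqp : q ≠ p) {x : R}
    (hx : (q : R) ∣ x ^ 2) : (q : R) ∣ x := by
  obtain ⟨a, b, rfl⟩ := h.exists_eq x
  have h4 := h.four_mul
  have hq' := Nat.prime_iff_prime_int.1 hq
  have h1 : ((a : R) + b * θ) ^ 2 = ((a ^ 2 - m * b ^ 2 : ℤ) : R) + (b * (2 * a + b) : ℤ) * θ := by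
    push_cast
    linear_combination (b : R) ^ 2 * h.sq_eq
  rw [h1, ← Int.cast_natCast, h.intCast_dvd_iff] at hx
  obtain ⟨hx1, hx2⟩ := hx
  have hb : (q : ℤ) ∣ b := by
    rcases hq'.dvd_or_dvd hx2 with hb | hb
    · exact hb
    · have h2 : (q : ℤ) ∣ p * b ^ 2 := by
        have : (p : ℤ) * b ^ 2 = (2 * a - b) * (2 * a + b) - 4 * (a ^ 2 - m * b ^ 2) := by
          linear_combination - b ^ 2 * h4
        rw [this]
        exact dvd_sub (hb.mul_left _) (hx1.mul_left _)
      rcases hq'.dvd_or_dvd h2 with h3 | h3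
      · exact absurd ((Nat.prime_dvd_prime_iff_eq hq hp).1 (by exact_mod_cast h3)) hqp
      · exact hq'.dvd_of_dvd_pow h3
  have ha : (q : ℤ) ∣ a := by
    refine hq'.dvd_of_dvd_pow (n := 2) ?_
    have : a ^ 2 = (a ^ 2 - m * b ^ 2) + m * b * b := by ring
    rw [this]
    exact dvd_add hx1 (hb.mul_left _)
  rw [← Int.cast_natCast, h.intCast_dvd_iff]
  exact ⟨ha, hb⟩

theorem isPrincipal_span_singleton_mul {c : R} {J : Ideal R} (hJ : J.IsPrincipal) :
    (Ideal.span {c} * J).IsPrincipal := by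
  obtain ⟨x, rfl⟩ := hJ
  exact ⟨c * x, Ideal.span_singleton_mul_span_singleton c x⟩

theorem isPrincipal_of_sq_eq_span_natCast [IsDedekindDomain R] [Module.Free ℤ R]
    [Module.Finite ℤ R] (h : IsNormFormGenerator p m θ) (hp : p.Prime) (r : ℕ) (hr : 0 < r)
    (J : Ideal R) (hJ : J ^ 2 = Ideal.span {(r : R)}) : J.IsPrincipal := by
  have hne {n : ℕ} (hn : n ≠ 0) : (n : R) ≠ 0 := by
    intro h0
    have := (h.int_add_mul_eq_zero (a := n) (b := 0) (by simpa using h0)).1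
    exact hn (by exact_mod_cast this)
  induction r using Nat.strong_induction_on generalizing J with
  | _ r ih =>
  by_cases hr1 : r = 1
  · have : J = ⊤ := by
      rw [hr1, Nat.cast_one, Ideal.span_singleton_one] at hJ
      exact top_le_iff.1 (hJ ▸ Ideal.pow_le_self two_ne_zero)
    rw [this]
    exact ⟨1, by rw [← Ideal.span, Ideal.span_singleton_one]⟩
  have hq := Nat.minFac_prime hr1
  obtain ⟨s, hs⟩ := Nat.minFac_dvd r
  set q := r.minFac
  have hs0 : 0 < s := Nat.pos_of_ne_zero (by rintro rfl; omega)
  have hsr : s < r := by rw [hs]; nlinarith [hq.two_le]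
  have hmem {x : R} (hx : x ∈ J) : (q : R) ∣ x ^ 2 := by
    have h1 : x ^ 2 ∈ J ^ 2 := Ideal.pow_mem_pow hx 2
    rw [hJ, Ideal.mem_span_singleton, hs, Nat.cast_mul] at h1
    exact (Dvd.intro _ rfl).trans h1
  have hfac {c : R} (hc : ∀ x ∈ J, c ∣ x) : ∃ J', J = Ideal.span {c} * J' :=
    Ideal.dvd_iff_le.2 fun x hx ↦ Ideal.mem_span_singleton.2 (hc x hx)
  have hqs : (Ideal.span {(q : R)} : Ideal R) ≠ 0 := by
    simpa [Ideal.zero_eq_bot, Ideal.span_singleton_eq_bot] using hne hq.ne_zero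
  by_cases hqp : q = p
  · have hδ : (2 * θ - 1) ^ 2 = -(q : R) := by
      have h4 : (4 : R) * m = 1 + p := by exact_mod_cast congrArg (Int.cast (R := R)) h.four_mul
      rw [hqp]
      linear_combination 4 * h.sq_eq - h4
    obtain ⟨J', rfl⟩ := hfac (c := 2 * θ - 1) fun x hx ↦ by
      rw [← IsIntegrallyClosed.pow_dvd_pow_iff two_ne_zero, hδ, neg_dvd]
      exact hmem hx
    refine isPrincipal_span_singleton_mul (ih s hsr hs0 J' ?_)
    rw [mul_pow, Ideal.span_singleton_pow, hδ, Ideal.span_singleton_neg, hs, Nat.cast_mul,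
      ← Ideal.span_singleton_mul_span_singleton] at hJ
    exact mul_left_cancel₀ hqs hJ
  · obtain ⟨J', rfl⟩ := hfac (c := q) fun x hx ↦ h.natCast_dvd_of_dvd_sq hp hq hqp (hmem hx)
    rw [mul_pow, sq, mul_assoc, hs, Nat.cast_mul,
      ← Ideal.span_singleton_mul_span_singleton] at hJ
    have h1 := mul_left_cancel₀ hqs hJ
    have h2 : (q : R) ∣ s := by
      rw [← Ideal.mem_span_singleton]
      have h3 : (s : R) ∈ Ideal.span {(q : R)} * J' ^ 2 := by
        rw [h1]
        exact Ideal.mem_span_singleton_self _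
      exact Ideal.mul_le_left h3
    obtain ⟨t, rfl⟩ : q ∣ s := by
      have : ((q : ℤ) : R) ∣ (s : ℤ) := by simpa using h2
      exact_mod_cast h.intCast_dvd_intCast_iff.1 this
    refine isPrincipal_span_singleton_mul (ih t ?_ (Nat.pos_of_mul_pos_left hs0) J' ?_)
    · exact lt_of_le_of_lt (Nat.le_mul_of_pos_left _ hq.pos) hsr
    · rw [Nat.cast_mul, ← Ideal.span_singleton_mul_span_singleton] at h1
      exact mul_left_cancel₀ hqs h1

theorem isPrincipal_of_isPrincipal_sq [IsDedekindDomain R] [Module.Free ℤ R]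
    [Module.Finite ℤ R] (h : IsNormFormGenerator p m θ) (hp : p.Prime) {I : Ideal R}
    (hI0 : I ≠ ⊥) (hI : (I ^ 2).IsPrincipal) : I.IsPrincipal := by
  obtain ⟨β, hβ⟩ := hI
  rw [← Ideal.span] at hβ
  have hn0 : Ideal.absNorm I ≠ 0 := by rwa [Ne, Ideal.absNorm_eq_zero_iff]
  have hN := congrArg Ideal.absNorm hβ
  rw [map_pow, Ideal.absNorm_span_singleton] at hN
  obtain ⟨a, b, rfl⟩ := h.exists_eq β
  have h4 := h.four_mul
  rw [h.norm_eq] at hN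
  set n := Ideal.absNorm I
  have hnn : (n : ℤ) ^ 2 = a ^ 2 + a * b + m * b ^ 2 := by
    have h0 : 0 ≤ a ^ 2 + a * b + m * b ^ 2 := by
      have hp' : (0 : ℤ) ≤ p := by positivity
      nlinarith [sq_nonneg (2 * a + b), mul_nonneg hp' (sq_nonneg b)]
    rw [← Int.natAbs_of_nonneg h0, ← hN]
    push_cast
    ring
  -- Hilbert 90: multiplying `I` by the conjugate of `n + β` makes its square rational.
  obtain ⟨N, hN⟩ : ∃ N : ℤ, N = (n + a) ^ 2 + (n + a) * b + m * b ^ 2 := ⟨_, rfl⟩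
  have hβγ : ((a : R) + b * θ) * ((n + a + b : R) - b * θ) = n * (n + a + b * θ) := by
    have hnnR : (n : R) ^ 2 = a ^ 2 + a * b + m * b ^ 2 := by
      exact_mod_cast congrArg (Int.cast (R := R)) hnn
    linear_combination -(b : R) ^ 2 * h.sq_eq - hnnR
  have hγγ : ((n : R) + a + b * θ) * ((n + a + b : R) - b * θ) = N := by
    rw [hN]
    push_cast
    linear_combination -(b : R) ^ 2 * h.sq_eq
  have hsq : ((a : R) + b * θ) * ((n + a + b : R) - b * θ) ^ 2 = n * N := by
    linear_combination ((n + a + b : R) - b * θ) * hβγ + n * hγγ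
  by_cases hN0 : N = 0
  · have hγ := h.norm_eq (n + a) b
    rw [← hN, hN0, Algebra.norm_eq_zero_iff] at hγ
    obtain ⟨ha, rfl⟩ := h.int_add_mul_eq_zero hγ
    obtain rfl : a = -n := by linarith
    refine h.isPrincipal_of_sq_eq_span_natCast hp n (Nat.pos_of_ne_zero hn0) I ?_
    rw [hβ]
    simp [Ideal.span_singleton_neg]
  · have hNpos : 0 < N := by
      refine lt_of_le_of_ne ?_ (Ne.symm hN0)
      have hp' : (0 : ℤ) ≤ p := by positivity
      nlinarith [sq_nonneg (2 * (n + a) + b), mul_nonneg hp' (sq_nonneg b)]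
    lift N to ℕ using hNpos.le
    generalize (n + a + b : R) - b * θ = c at hβγ hγγ hsq
    have hc : c ≠ 0 := by
      rintro rfl
      rw [mul_zero] at hγγ
      have := (h.int_add_mul_eq_zero (a := N) (b := 0) (by simpa using hγγ.symm)).1
      exact hN0 this
    obtain ⟨δ, hδ⟩ := h.isPrincipal_of_sq_eq_span_natCast hp (n * N)
      (Nat.mul_pos (Nat.pos_of_ne_zero hn0) (by exact_mod_cast hNpos)) (Ideal.span {c} * I) (by
        rw [mul_pow, hβ, Ideal.span_singleton_pow, Ideal.span_singleton_mul_span_singleton,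
          mul_comm, hsq]
        simp)
    rw [← Ideal.span] at hδ
    obtain ⟨ε, rfl⟩ : c ∣ δ := by
      rw [← Ideal.mem_span_singleton]
      have h3 : δ ∈ Ideal.span {c} * I := by
        rw [hδ]
        exact Ideal.mem_span_singleton_self _
      exact Ideal.mul_le_left h3
    rw [← Ideal.span_singleton_mul_span_singleton] at hδ
    refine ⟨ε, mul_left_cancel₀ ?_ hδ⟩
    simpa [Ideal.zero_eq_bot, Ideal.span_singleton_eq_bot] using hc

theorem eq_one_of_sq_eq_one [IsDedekindDomain R] [Module.Free ℤ R]
    [Module.Finite ℤ R] (h : IsNormFormGenerator p m θ) (hp : p.Prime) {x : ClassGroup R}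
    (hx : x ^ 2 = 1) : x = 1 := by
  obtain ⟨⟨I, hI⟩, rfl⟩ := ClassGroup.mk0_surjective x
  rw [ClassGroup.mk0_eq_one_iff]
  refine h.isPrincipal_of_isPrincipal_sq hp (nonZeroDivisors.ne_zero hI) ?_
  rwa [← map_pow, SubmonoidClass.mk_pow, ClassGroup.mk0_eq_one_iff] at hx

end IsNormFormGenerator

namespace IsQsqrtNeg

variable {K : Type*} [Field K] [NumberField K] {α : K}

theorem exists_isNormFormGenerator {p : ℕ} (hp : p.Prime) (hp4 : p % 4 = 3)
    (hα : α ^ 2 = -(p : K)) (htop : Algebra.adjoin ℚ {α} = ⊤) :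
    ∃ θ : 𝓞 K, IsNormFormGenerator p (((p + 1) / 4 : ℕ) : ℤ) θ := by
  obtain ⟨m, hm⟩ : ∃ m, (p + 1) / 4 = m := ⟨_, rfl⟩
  have h4 : 4 * m = 1 + p := by omega
  have h4K : (4 : K) * m = 1 + p := by exact_mod_cast congrArg (Nat.cast (R := K)) h4
  have h4Q : (4 : ℚ) * m = 1 + p := by exact_mod_cast congrArg (Nat.cast (R := ℚ)) h4
  have hθ : ((1 + α) / 2) ^ 2 - (1 + α) / 2 + m = 0 := by
    linear_combination hα / 4 + h4K / 4
  have hαint : IsIntegral ℤ ((1 + α) / 2) := by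
    refine ⟨Polynomial.X ^ 2 - Polynomial.X + Polynomial.C (m : ℤ), by monicity!, ?_⟩
    simpa using hθ
  rw [hm]
  obtain ⟨θ, hθα⟩ : ∃ θ : 𝓞 K, (θ : K) = (1 + α) / 2 := ⟨⟨_, hαint⟩, rfl⟩
  refine ⟨θ, by exact_mod_cast h4, ?_, fun x ↦ ?_, fun a b ↦ ?_⟩
  · ext
    simp only [map_pow, map_sub, map_intCast, hθα]
    push_cast
    linear_combination hθ
  · obtain ⟨u, v, huv⟩ := exists_rat_add_mul hp.pos hα htop (x : K)
    have hx : IsIntegral ℤ ((u : K) + v * α) := huv ▸ x.isIntegral_coe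
    obtain ⟨n, hn⟩ := exists_int_norm hp.pos hα htop hx
    obtain ⟨s, hs⟩ := exists_int_trace hp.pos hα htop hx
    obtain ⟨w, hw⟩ := exists_int_im hp (w := 2 * v) (k := 4 * n - s ^ 2) (by
      push_cast; rw [hs, hn]; ring)
    have h1 : 4 * n = s ^ 2 + p * w ^ 2 := by
      have : (4 : ℚ) * n = s ^ 2 + p * w ^ 2 := by rw [hs, hw, hn]; ring
      exact_mod_cast this
    have h2 : Even (s - w) := by
      have h3 : Even (s ^ 2 - w ^ 2) := ⟨2 * n - 2 * m * w ^ 2, by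
        have : (4 : ℤ) * m = 1 + p := by exact_mod_cast h4
        linear_combination -h1 + this * w ^ 2⟩
      simpa [Int.even_sub, Int.even_pow] using h3
    obtain ⟨a, ha⟩ := h2
    refine ⟨a, w, ?_⟩
    ext
    simp only [map_add, map_mul, map_intCast, hθα]
    have hsK : (s : K) = 2 * u := by exact_mod_cast congrArg (Rat.cast (K := K)) hs
    have hwK : (w : K) = 2 * v := by exact_mod_cast congrArg (Rat.cast (K := K)) hw
    have haK : (s : K) - w = a + a := by exact_mod_cast congrArg (Int.cast (R := K)) ha
    rw [huv]
    linear_combination -hsK / 2 - α * hwK / 2 + haK / 2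
  · have h1 := norm_rat_add_mul hp.pos hα htop (a + b / 2) (b / 2)
    have h2 : (algebraMap (𝓞 K) K) (a + b * θ) =
        ((a + b / 2 : ℚ) : K) + (b / 2 : ℚ) * α := by
      simp only [map_add, map_mul, map_intCast, hθα]
      push_cast
      ring
    rw [← h2, ← Algebra.coe_norm_int] at h1
    have h3 : (Algebra.norm ℤ ((a : 𝓞 K) + b * θ) : ℚ) =
        a ^ 2 + a * b + m * b ^ 2 := by
      rw [h1]
      linear_combination - h4Q * b ^ 2 / 4
    exact_mod_cast h3

theorem mod_four_of_isPrime_span_two {p : ℕ} (hp : p.Prime) (hodd : Odd p)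
    (hα : α ^ 2 = -(p : K)) (htop : Algebra.adjoin ℚ {α} = ⊤)
    (h2 : (Ideal.span {(2 : 𝓞 K)}).IsPrime) : p % 4 = 3 := by
  obtain ⟨k, rfl⟩ := hodd
  have hαint : IsIntegral ℤ α := by
    refine ⟨Polynomial.X ^ 2 + Polynomial.C ((2 * k + 1 : ℕ) : ℤ), by monicity!, ?_⟩
    simp only [Polynomial.eval₂_add, Polynomial.eval₂_pow, Polynomial.eval₂_X,
      Polynomial.eval₂_C, hα]
    simp
  obtain ⟨A, hAα⟩ : ∃ A : 𝓞 K, (A : K) = α := ⟨⟨α, hαint⟩, rfl⟩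
  have hA : A ^ 2 = -((2 * k + 1 : ℕ) : 𝓞 K) := by
    ext
    simp only [map_pow, map_neg, map_natCast, hAα, hα]
  have h1 : (A + 1) ^ 2 ∈ Ideal.span {(2 : 𝓞 K)} := by
    rw [Ideal.mem_span_singleton]
    refine ⟨A - k, ?_⟩
    push_cast at hA
    linear_combination hA
  obtain ⟨y, hy⟩ := Ideal.mem_span_singleton.1 (h2.mem_of_pow_mem 2 h1)
  have hy' : (y : K) = (1 / 2 : ℚ) + (1 / 2 : ℚ) * α := by
    have h3 := congrArg (algebraMap (𝓞 K) K) hy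
    simp only [map_add, map_mul, map_one, map_ofNat, hAα] at h3
    push_cast
    linear_combination -h3 / 2
  obtain ⟨n, hn⟩ := exists_int_norm hp.pos hα htop (u := 1 / 2) (v := 1 / 2) (by
    rw [← hy']
    exact y.isIntegral_coe)
  have h4 : (4 : ℚ) * n = 2 * k + 2 := by
    rw [hn]
    push_cast
    ring
  have h5 : 4 * n = 2 * k + 2 := by exact_mod_cast h4
  omega

end IsQsqrtNeg

theorem IsNormFormGenerator.odd_of_isPrime_span_two {p : ℕ} {R : Type*} [CommRing R] [IsDomain R]
    [Module.Free ℤ R] [Module.Finite ℤ R] {m : ℤ} {θ : R} (h : IsNormFormGenerator p m θ)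
    (h2 : (Ideal.span {(2 : R)}).IsPrime) : Odd m := by
  by_contra hm
  obtain ⟨k, rfl⟩ := Int.not_odd_iff_even.1 hm
  have h1 : θ * (θ - 1) ∈ Ideal.span {(2 : R)} := by
    rw [Ideal.mem_span_singleton]
    refine ⟨-k, ?_⟩
    have := h.sq_eq
    push_cast at this
    linear_combination this
  have key (a : ℤ) : ¬ (2 : R) ∣ a + (1 : ℤ) * θ := by
    rw [show (2 : R) = (2 : ℤ) by norm_cast, h.intCast_dvd_iff]
    omega
  rcases h2.mem_or_mem h1 with h3 | h3
  · exact key 0 (by simpa using Ideal.mem_span_singleton.1 h3)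
  · refine key (-1) ?_
    rw [Ideal.mem_span_singleton] at h3
    convert h3 using 1
    push_cast
    ring

theorem statement19 (p : ℕ) (hp : p.Prime) (hodd : Odd p)
    (K : Type) [Field K] [NumberField K] (hK : IsQsqrtNeg p K) :
    p % 8 = 3 ↔
      ((Ideal.span {(2 : 𝓞 K)}).IsPrime ∧
        ∀ x : ClassGroup (𝓞 K), x ^ 2 = 1 → x = 1) := by
  obtain ⟨α, hα, htop⟩ := hK
  constructor
  · intro h8
    obtain ⟨θ, hθ⟩ := IsQsqrtNeg.exists_isNormFormGenerator hp (by omega) hα htop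
    refine ⟨hθ.isPrime_span_two ?_, fun x hx ↦ hθ.eq_one_of_sq_eq_one hp hx⟩
    rw [Int.odd_iff]
    omega
  · rintro ⟨h2, -⟩
    have h4 := IsQsqrtNeg.mod_four_of_isPrime_span_two hp hodd hα htop h2
    obtain ⟨θ, hθ⟩ := IsQsqrtNeg.exists_isNormFormGenerator hp h4 hα htop
    have h3 := hθ.odd_of_isPrime_span_two h2
    rw [Int.odd_iff] at h3
    omega
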